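/- arXiv:1708.09339 — 2 statements merged into one kernel-verified Lean document; each statement's English description precedes it below -/
import Mathlib

section
/- For contact angle γ = π/2 and any A > 0, C > 0, the dimensionless total force F has at most two zeros on [0, π]: the set {φ ∈ [0, π] : F(φ) = 0} has at most two elements. -/
open Real in
/-- The derivative of the total force, in terms of `sin φ` and `sin (φ / 2 + π / 4)`. -/
lemma hasDerivAt_totalForce (A C x : ℝ) :
    HasDerivAt (fun φ => -A * C ^ 2 - 2 * sin (φ + π / 2)
      - 4 * C * cos ((φ + π / 2) / 2) * sin φ
      - (1 / 2) * C ^ 2 * sin (2 * φ) + C ^ 2 * φ)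
      (2 * (sin x + C ^ 2 * sin x ^ 2 + C * sin ((x + π / 2) / 2) * (3 * sin x - 2))) x := by
  have h1 : HasDerivAt (fun φ : ℝ => φ + π / 2) 1 x := (hasDerivAt_id x).add_const _
  have h2 : HasDerivAt (fun φ : ℝ => (φ + π / 2) / 2) (1 / 2) x := h1.div_const 2
  have h3 : HasDerivAt (fun φ : ℝ => 2 * φ) (2 * 1) x := (hasDerivAt_id x).const_mul 2
  have h := ((((h1.sin.const_mul 2).const_sub (-A * C ^ 2)).sub
    ((h2.cos.const_mul (4 * C)).mul (hasDerivAt_sin x))).sub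
    (h3.sin.const_mul ((1 / 2) * C ^ 2))).add ((hasDerivAt_id x).const_mul (C ^ 2))
  refine h.congr_deriv ?_
  have hx : x = 2 * ((x + π / 2) / 2) - π / 2 := by ring
  have hcos : cos x = 2 * sin ((x + π / 2) / 2) * cos ((x + π / 2) / 2) := by
    conv_lhs => rw [hx, cos_sub_pi_div_two, sin_two_mul]
  have hsin : sin x = 1 - 2 * cos ((x + π / 2) / 2) ^ 2 := by
    conv_lhs => rw [hx, sin_sub_pi_div_two, cos_two_mul]
    ring
  rw [cos_add_pi_div_two, cos_two_mul]
  have hsq := sin_sq_add_cos_sq x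
  linear_combination (-4 * C * cos ((x + π / 2) / 2)) * hcos
    + (-4 * C * sin ((x + π / 2) / 2)) * hsin - 2 * C ^ 2 * hsq

open Real in
/-- On `[0, π]` the derivative of the total force is a strictly increasing function of `sin φ`. -/
lemma totalForce_deriv_lt_of_sin_lt {C u v : ℝ} (hC : 0 < C) (hu : u ∈ Set.Icc 0 π)
    (hv : v ∈ Set.Icc 0 π) (huv : sin u < sin v) :
    2 * (sin u + C ^ 2 * sin u ^ 2 + C * sin ((u + π / 2) / 2) * (3 * sin u - 2)) <
      2 * (sin v + C ^ 2 * sin v ^ 2 + C * sin ((v + π / 2) / 2) * (3 * sin v - 2)) := by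
  have hsin (x : ℝ) : sin x = 2 * sin ((x + π / 2) / 2) ^ 2 - 1 := by
    have hx : x = 2 * ((x + π / 2) / 2) - π / 2 := by ring
    conv_lhs => rw [hx, sin_sub_pi_div_two, cos_two_mul]
    linear_combination -2 * sin_sq_add_cos_sq ((x + π / 2) / 2)
  have hpos {x : ℝ} (hx : x ∈ Set.Icc 0 π) : 0 < sin ((x + π / 2) / 2) :=
    sin_pos_of_pos_of_lt_pi (by linarith [hx.1, pi_pos]) (by linarith [hx.2, pi_pos])
  have hu0 := sin_nonneg_of_mem_Icc hu
  have hsu := hsin u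
  have hsv := hsin v
  have hpu := hpos hu
  have hpv := hpos hv
  generalize sin ((u + π / 2) / 2) = s at *
  generalize sin ((v + π / 2) / 2) = t at *
  have hst : s < t := lt_of_pow_lt_pow_left₀ 2 hpv.le (by linarith)
  have hsq : sin u ^ 2 < sin v ^ 2 := by gcongr
  have hcubic : s * (3 * sin u - 2) < t * (3 * sin v - 2) := by
    rw [hsu, hsv]
    have : 0 < (t - s) * (6 * (t ^ 2 + t * s + s ^ 2) - 5) :=
      mul_pos (by linarith) (by nlinarith)
    linarith
  have h1 := mul_lt_mul_of_pos_left hsq (pow_pos hC 2)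
  have h2 := mul_lt_mul_of_pos_left hcubic hC
  linarith

open Real in
/-- Among three increasing points of `[0, π]`, the sine is not smallest at the middle one. -/
lemma min_sin_lt_sin_of_mem_Ioo {a b c : ℝ} (ha : 0 ≤ a) (hab : a < b) (hbc : b < c)
    (hc : c ≤ π) : min (sin a) (sin c) < sin b := by
  have hac : a < c := hab.trans hbc
  exact strictConcaveOn_sin_Icc.lt_on_openSegment ⟨ha, hac.le.trans hc⟩
    ⟨ha.trans hac.le, hc⟩ hac.ne (by rw [openSegment_eq_Ioo hac]; exact ⟨hab, hbc⟩)

/-- For `γ = π/2` and any `A, C > 0`, the dimensionless total force has at most two zeros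
on `[0, π]`. -/
theorem total_force_at_most_two_zeros (A C : ℝ) (hA : 0 < A) (hC : 0 < C)
    (F : ℝ → ℝ)
    (hF : F = fun φ => -A * C ^ 2 - 2 * Real.sin (φ + Real.pi / 2)
      - 4 * C * Real.cos ((φ + Real.pi / 2) / 2) * Real.sin φ
      - (1 / 2) * C ^ 2 * Real.sin (2 * φ) + C ^ 2 * φ) :
    Set.encard {φ ∈ Set.Icc (0 : ℝ) Real.pi | F φ = 0} ≤ 2 := by
  obtain ⟨F', hF'⟩ : ∃ F' : ℝ → ℝ, F' = fun x => 2 * (Real.sin x + C ^ 2 * Real.sin x ^ 2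
    + C * Real.sin ((x + Real.pi / 2) / 2) * (3 * Real.sin x - 2)) := ⟨_, rfl⟩
  have hderiv (x : ℝ) : HasDerivAt F (F' x) x := by
    rw [hF, hF']
    exact hasDerivAt_totalForce A C x
  have hcont : Continuous F :=
    continuous_iff_continuousAt.2 fun x => (hderiv x).continuousAt
  have hF0 : F 0 < 0 := by
    have := mul_pos hA (pow_pos hC 2)
    simp only [hF, zero_add, Real.sin_pi_div_two, mul_zero, Real.sin_zero]
    linarith
  have no_three {x y z : ℝ} (hx : 0 ≤ x) (hxy : x < y) (hyz : y < z) (hz : z ≤ Real.pi)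
      (hFx : F x = 0) (hFy : F y = 0) (hFz : F z = 0) : False := by
    have hx0 : 0 < x := hx.lt_of_ne (by rintro rfl; exact hF0.ne hFx)
    obtain ⟨a, ha, hFa⟩ := exists_hasDerivAt_eq_slope F F' hx0 hcont.continuousOn
      fun t _ => hderiv t
    obtain ⟨b, hb, hFb⟩ := exists_hasDerivAt_eq_zero hxy hcont.continuousOn
      (hFx.trans hFy.symm) fun t _ => hderiv t
    obtain ⟨c, hc, hFc⟩ := exists_hasDerivAt_eq_zero hyz hcont.continuousOn
      (hFy.trans hFz.symm) fun t _ => hderiv t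
    have hFa_pos : 0 < F' a := by
      rw [hFa, hFx]
      exact div_pos (by linarith) (by linarith)
    have hab : a < b := ha.2.trans hb.1
    have hbc : b < c := hb.2.trans hc.1
    have hcπ : c ≤ Real.pi := hc.2.le.trans hz
    have hmono {u : ℝ} (hu : u ∈ Set.Icc 0 Real.pi) (hub : Real.sin u < Real.sin b) :
        F' u < F' b := by
      rw [hF']
      exact totalForce_deriv_lt_of_sin_lt hC hu
        ⟨(ha.1.trans hab).le, hbc.le.trans hcπ⟩ hub
    rcases min_lt_iff.1 (min_sin_lt_sin_of_mem_Ioo ha.1.le hab hbc hcπ) with h | h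
    · exact absurd (hmono ⟨ha.1.le, (hab.trans hbc).le.trans hcπ⟩ h) (by linarith)
    · exact absurd (hmono ⟨(ha.1.trans (hab.trans hbc)).le, hcπ⟩ h) (by linarith)
  by_contra! hcard
  obtain ⟨t, hts, ht⟩ := Set.exists_subset_encard_eq (Order.add_one_le_of_lt hcard)
  obtain ⟨x, y, z, hxy, hxz, hyz, rfl⟩ :=
    Set.encard_eq_three.1 (ht.trans (by norm_num))
  obtain ⟨hx, hFx⟩ := hts (show x ∈ _ by simp)
  obtain ⟨hy, hFy⟩ := hts (show y ∈ _ by simp)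
  obtain ⟨hz, hFz⟩ := hts (show z ∈ _ by simp)
  rcases hxy.lt_or_gt with h1 | h1 <;> rcases hxz.lt_or_gt with h2 | h2 <;>
    rcases hyz.lt_or_gt with h3 | h3
  · exact no_three hx.1 h1 h3 hz.2 hFx hFy hFz
  · exact no_three hx.1 h2 h3 hy.2 hFx hFz hFy
  · exact absurd (h1.trans h3) h2.not_gt
  · exact no_three hz.1 h2 h1 hy.2 hFz hFx hFy
  · exact no_three hy.1 h1 h2 hz.2 hFy hFx hFz
  · exact absurd (h1.trans h2) h3.not_gt
  · exact no_three hy.1 h3 h2 hx.2 hFy hFz hFx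
  · exact no_three hz.1 h3 h1 hx.2 hFz hFy hFx
end

section
/- Let γ ∈ [0, π/2) and C > 0 satisfy −4·C·sin(γ/2) + 2·cos γ < 0 (i.e. F′(π) < 0). Then F has exactly two critical points in (0, π): there exist φ₁ ∈ (0, π/2) and φ₂ ∈ (3π/4, π) with F′(φ₁) = F′(φ₂) = 0, and F′(φ) < 0 for φ ∈ [0, φ₁), F′(φ) > 0 for φ ∈ (φ₁, φ₂), and F′(φ) < 0 for φ ∈ (φ₂, π]. -/
open Real Set

/-- The derivative of the dimensionless total force. -/
noncomputable def forceDeriv (γ C φ : ℝ) : ℝ :=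
  -2 * cos (φ + γ)
    + 2 * C * (sin ((φ + γ) / 2) * sin φ - 2 * (cos ((φ + γ) / 2) * cos φ))
    + 2 * C ^ 2 * sin φ ^ 2

/-- The second derivative of the dimensionless total force. -/
noncomputable def forceSecondDeriv (γ C φ : ℝ) : ℝ :=
  2 * sin (φ + γ)
    + C * (5 * (cos ((φ + γ) / 2) * sin φ) + 4 * (sin ((φ + γ) / 2) * cos φ))
    + 4 * C ^ 2 * (sin φ * cos φ)

lemma hasDerivAt_force (γ A C φ : ℝ) :
    HasDerivAt (fun φ => -A * C ^ 2 - 2 * sin (φ + γ)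
      - 4 * C * cos ((φ + γ) / 2) * sin φ
      - (1 / 2) * C ^ 2 * sin (2 * φ) + C ^ 2 * φ) (forceDeriv γ C φ) φ := by
  have hadd : HasDerivAt (fun x : ℝ => x + γ) 1 φ := (hasDerivAt_id' φ).add_const γ
  have hdouble : HasDerivAt (fun x : ℝ => 2 * x) 2 φ := by
    simpa using (hasDerivAt_id' φ).const_mul (2 : ℝ)
  have h := (((((hadd.sin.const_mul 2).const_sub (-A * C ^ 2)).sub
    (((hadd.div_const 2).cos.const_mul (4 * C)).mul (hasDerivAt_sin φ))).sub
    (hdouble.sin.const_mul ((1 / 2) * C ^ 2))).add ((hasDerivAt_id' φ).const_mul (C ^ 2)))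
  refine h.congr_deriv ?_
  rw [cos_two_mul, forceDeriv, sin_sq]
  ring

lemma hasDerivAt_forceDeriv (γ C φ : ℝ) :
    HasDerivAt (forceDeriv γ C) (forceSecondDeriv γ C φ) φ := by
  have hadd : HasDerivAt (fun x : ℝ => x + γ) 1 φ := (hasDerivAt_id' φ).add_const γ
  have hhalf := hadd.div_const 2
  have h := ((hadd.cos.const_mul (-2)).add
    (((hhalf.sin.mul (hasDerivAt_sin φ)).sub
      ((hhalf.cos.mul (hasDerivAt_cos φ)).const_mul 2)).const_mul (2 * C))).add
    (((hasDerivAt_sin φ).pow 2).const_mul (2 * C ^ 2))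
  refine h.congr_deriv ?_
  rw [forceSecondDeriv]
  push_cast
  ring

lemma continuous_forceDeriv (γ C : ℝ) : Continuous (forceDeriv γ C) :=
  continuous_iff_continuousAt.2 fun φ => (hasDerivAt_forceDeriv γ C φ).continuousAt

lemma strictMonoOn_forceDeriv {γ C : ℝ} (hγ : γ ∈ Ico 0 (π / 2)) (hC : 0 < C) :
    StrictMonoOn (forceDeriv γ C) (Icc 0 (π / 2)) := by
  obtain ⟨hγ0, hγ1⟩ := hγ
  refine strictMonoOn_of_deriv_pos (convex_Icc _ _) (continuous_forceDeriv γ C).continuousOn ?_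
  intro φ hφ
  rw [interior_Icc] at hφ
  obtain ⟨h0, h1⟩ := hφ
  rw [(hasDerivAt_forceDeriv γ C φ).deriv, forceSecondDeriv]
  have hsin : 0 < sin (φ + γ) := sin_pos_of_pos_of_lt_pi (by linarith) (by linarith)
  have hcosHalf : 0 < cos ((φ + γ) / 2) := cos_pos_of_mem_Ioo ⟨by linarith, by linarith⟩
  have hsinHalf : 0 < sin ((φ + γ) / 2) := sin_pos_of_pos_of_lt_pi (by linarith) (by linarith)
  have hsinφ : 0 < sin φ := sin_pos_of_pos_of_lt_pi h0 (by linarith)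
  have hcosφ : 0 < cos φ := cos_pos_of_mem_Ioo ⟨by linarith, by linarith⟩
  positivity

lemma strictAntiOn_forceDeriv {γ C m : ℝ} (hγ : γ ∈ Ico 0 (π / 2)) (hC : 0 < C)
    (hmγ : π - γ ≤ m) : StrictAntiOn (forceDeriv γ C) (Icc m π) := by
  obtain ⟨hγ0, hγ1⟩ := hγ
  refine strictAntiOn_of_deriv_neg (convex_Icc _ _) (continuous_forceDeriv γ C).continuousOn ?_
  intro φ hφ
  rw [interior_Icc] at hφ
  obtain ⟨h0, h1⟩ := hφ
  rw [(hasDerivAt_forceDeriv γ C φ).deriv, forceSecondDeriv]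
  have hsin : sin (φ + γ) ≤ 0 := by
    have h := sin_nonneg_of_nonneg_of_le_pi (x := φ + γ - π) (by linarith) (by linarith)
    rw [sin_sub_pi] at h
    linarith
  have hcosHalf : cos ((φ + γ) / 2) ≤ 0 :=
    cos_nonpos_of_pi_div_two_le_of_le (by linarith) (by linarith)
  have hsinHalf : 0 < sin ((φ + γ) / 2) := sin_pos_of_pos_of_lt_pi (by linarith) (by linarith)
  have hsinφ : 0 < sin φ := sin_pos_of_pos_of_lt_pi (by linarith) h1
  have hcosφ : cos φ < 0 := cos_neg_of_pi_div_two_lt_of_lt (by linarith) (by linarith)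
  have hcs := mul_nonpos_of_nonpos_of_nonneg hcosHalf hsinφ.le
  have hsc := mul_neg_of_pos_of_neg hsinHalf hcosφ
  have hlin := mul_neg_of_pos_of_neg hC
    (show 5 * (cos ((φ + γ) / 2) * sin φ) + 4 * (sin ((φ + γ) / 2) * cos φ) < 0 by linarith)
  have hquad := mul_neg_of_pos_of_neg (show 0 < 4 * C ^ 2 by positivity)
    (mul_neg_of_pos_of_neg hsinφ hcosφ)
  linarith

lemma forceDeriv_pos_of_half_angle {γ C φ : ℝ} (hC : 0 < C) (hsin : sin φ ≠ 0)
    (hcos : cos (φ + γ) ≤ 0)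
    (hle : 2 * (cos ((φ + γ) / 2) * cos φ) ≤ sin ((φ + γ) / 2) * sin φ) :
    0 < forceDeriv γ C φ := by
  have hlin := mul_nonneg (show 0 ≤ 2 * C by positivity) (sub_nonneg.2 hle)
  have hquad : 0 < 2 * C ^ 2 * sin φ ^ 2 := by positivity
  rw [forceDeriv]
  linarith

lemma forceDeriv_pos_of_add_le_pi {γ C φ : ℝ} (hγ : 0 ≤ γ) (hC : 0 < C)
    (hφ : φ ∈ Ico (π / 2) π) (hle : φ + γ ≤ π) : 0 < forceDeriv γ C φ := by
  obtain ⟨h0, h1⟩ := hφ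
  have hpi := pi_pos
  have hsinφ : 0 < sin φ := sin_pos_of_pos_of_lt_pi (by linarith) h1
  refine forceDeriv_pos_of_half_angle hC hsinφ.ne'
    (cos_nonpos_of_pi_div_two_le_of_le (by linarith) (by linarith)) ?_
  have hcosHalf : 0 ≤ cos ((φ + γ) / 2) := cos_nonneg_of_mem_Icc ⟨by linarith, by linarith⟩
  have hsinHalf : 0 ≤ sin ((φ + γ) / 2) :=
    sin_nonneg_of_nonneg_of_le_pi (by linarith) (by linarith)
  have hcosφ : cos φ ≤ 0 := cos_nonpos_of_pi_div_two_le_of_le h0 (by linarith)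
  have hcc := mul_nonpos_of_nonneg_of_nonpos hcosHalf hcosφ
  have hss := mul_nonneg hsinHalf hsinφ.le
  linarith

lemma forceDeriv_pos_of_le_three_pi_div_four {γ C φ : ℝ} (hγ : γ ∈ Ico 0 (π / 2)) (hC : 0 < C)
    (hφ : φ ∈ Icc (π / 2) (3 * π / 4)) : 0 < forceDeriv γ C φ := by
  obtain ⟨hγ0, hγ1⟩ := hγ
  obtain ⟨h0, h1⟩ := hφ
  have hpi := pi_pos
  rcases le_total (φ + γ) π with hle | hge
  · exact forceDeriv_pos_of_add_le_pi hγ0 hC ⟨h0, by linarith⟩ hle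
  have hsqrt : (7 / 5 : ℝ) ≤ √2 := le_sqrt_of_sq_le (by norm_num)
  have hcos : cos (φ + γ) ≤ -(7 / 10) := by
    have h := cos_le_cos_of_nonneg_of_le_pi (x := φ + γ - π) (y := π / 4)
      (by linarith) (by linarith) (by linarith)
    rw [cos_sub_pi, cos_pi_div_four] at h
    linarith
  have hsinφ : 0 < sin φ := sin_pos_of_pos_of_lt_pi (by linarith) (by linarith)
  refine forceDeriv_pos_of_half_angle hC hsinφ.ne' (by linarith) ?_
  have hsinHalf : 0 ≤ sin ((φ + γ) / 2) :=
    sin_nonneg_of_nonneg_of_le_pi (by linarith) (by linarith)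
  have hcosφ : cos φ ≤ 0 := cos_nonpos_of_pi_div_two_le_of_le h0 (by linarith)
  have hratio : 2 * -cos ((φ + γ) / 2) ≤ sin ((φ + γ) / 2) := by
    refine le_of_sq_le_sq ?_ hsinHalf
    have h := cos_sq ((φ + γ) / 2)
    rw [mul_div_cancel₀ (φ + γ) (two_ne_zero)] at h
    nlinarith [sin_sq_add_cos_sq ((φ + γ) / 2)]
  have hcosφ' : -cos φ ≤ sin φ := by
    have h := sin_nonneg_of_nonneg_of_le_pi (x := φ + π / 4) (by linarith) (by linarith)
    rw [sin_add, cos_pi_div_four, sin_pi_div_four] at h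
    nlinarith
  have h := mul_le_mul hratio hcosφ' (by linarith) hsinHalf
  linarith

/-- For `γ ∈ [0, π/2)` and `C > 0` with `−4·C·sin(γ/2) + 2·cos γ < 0` (i.e. `F′(π) < 0`), the
dimensionless total force has exactly two critical points in `(0, π)`: one in `(0, π/2)` and
one in `(3π/4, π)`, with `F′ < 0` before the first, `F′ > 0` between them, `F′ < 0` after. -/
theorem total_force_two_critical_points_acute (γ A C : ℝ)
    (hγ : γ ∈ Set.Ico (0 : ℝ) (Real.pi / 2)) (hA : 0 < A) (hC : 0 < C)
    (hcond : -4 * C * Real.sin (γ / 2) + 2 * Real.cos γ < 0)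
    (F : ℝ → ℝ)
    (hF : F = fun φ => -A * C ^ 2 - 2 * Real.sin (φ + γ)
      - 4 * C * Real.cos ((φ + γ) / 2) * Real.sin φ
      - (1 / 2) * C ^ 2 * Real.sin (2 * φ) + C ^ 2 * φ) :
    ∃ φ₁ ∈ Set.Ioo (0 : ℝ) (Real.pi / 2), ∃ φ₂ ∈ Set.Ioo (3 * Real.pi / 4) Real.pi,
      deriv F φ₁ = 0 ∧ deriv F φ₂ = 0 ∧
      (∀ φ ∈ Set.Ico (0 : ℝ) φ₁, deriv F φ < 0) ∧
      (∀ φ ∈ Set.Ioo φ₁ φ₂, 0 < deriv F φ) ∧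
      (∀ φ ∈ Set.Ioc φ₂ Real.pi, deriv F φ < 0) := by
  have hpi := Real.pi_pos
  have hderiv : deriv F = forceDeriv γ C := by
    ext φ
    rw [hF]
    exact (hasDerivAt_force γ A C φ).deriv
  rw [hderiv]
  obtain ⟨hγ0, hγ1⟩ := id hγ
  have hcosγ : 0 < cos γ := cos_pos_of_mem_Ioo ⟨by linarith, hγ1⟩
  have hγpos : 0 < γ := by
    refine lt_of_le_of_ne hγ0 fun h => ?_
    rw [← h, zero_div, sin_zero, cos_zero] at hcond
    linarith
  have hzero : forceDeriv γ C 0 < 0 := by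
    have hhalf : 0 < cos (γ / 2) := cos_pos_of_mem_Ioo ⟨by linarith, by linarith⟩
    have h := mul_pos hC hhalf
    simp only [forceDeriv, zero_add, sin_zero, cos_zero]
    linarith
  have hend : forceDeriv γ C π < 0 := by
    have hhalf : cos ((π + γ) / 2) = -sin (γ / 2) := by
      rw [← cos_add_pi_div_two]
      ring_nf
    have hcos : cos (π + γ) = -cos γ := by rw [add_comm, cos_add_pi]
    rw [forceDeriv, hhalf, hcos, sin_pi, cos_pi]
    linarith
  set m := max (3 * π / 4) (π - γ)
  have hm1 : 3 * π / 4 ≤ m := le_max_left _ _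
  have hm2 : π - γ ≤ m := le_max_right _ _
  have hmπ : m < π := max_lt (by linarith) (by linarith)
  have hmid : ∀ φ ∈ Icc (π / 2) m, 0 < forceDeriv γ C φ := by
    intro φ hφ
    rcases le_max_iff.1 hφ.2 with h | h
    · exact forceDeriv_pos_of_le_three_pi_div_four hγ hC ⟨hφ.1, h⟩
    · exact forceDeriv_pos_of_add_le_pi hγ0 hC ⟨hφ.1, by linarith⟩ (by linarith)
  have hmono := strictMonoOn_forceDeriv hγ hC
  have hanti := strictAntiOn_forceDeriv hγ hC hm2
  have hcont := continuous_forceDeriv γ C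
  obtain ⟨φ₁, ⟨h10, h11⟩, hφ₁⟩ := intermediate_value_Ioo (by linarith : (0 : ℝ) ≤ π / 2)
    hcont.continuousOn ⟨hzero, hmid _ ⟨le_rfl, by linarith⟩⟩
  obtain ⟨φ₂, ⟨h20, h21⟩, hφ₂⟩ := intermediate_value_Ioo' hmπ.le
    hcont.continuousOn ⟨hend, hmid m ⟨by linarith, le_rfl⟩⟩
  refine ⟨φ₁, ⟨h10, h11⟩, φ₂, ⟨by linarith, h21⟩, hφ₁, hφ₂, ?_, ?_, ?_⟩
  · rintro φ ⟨ha, hb⟩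
    rw [← hφ₁]
    exact hmono ⟨ha, by linarith⟩ ⟨h10.le, h11.le⟩ hb
  · rintro φ ⟨ha, hb⟩
    rcases le_total φ (π / 2) with h | h
    · rw [← hφ₁]
      exact hmono ⟨h10.le, h11.le⟩ ⟨by linarith, h⟩ ha
    rcases le_total φ m with h' | h'
    · exact hmid φ ⟨h, h'⟩
    · rw [← hφ₂]
      exact hanti ⟨h', by linarith⟩ ⟨h20.le, h21.le⟩ hb
  · rintro φ ⟨ha, hb⟩
    rw [← hφ₂]
    exact hanti ⟨h20.le, h21.le⟩ ⟨by linarith, hb⟩ ha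
end
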